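/- Let L be a language with finitely many relation symbols, and let K be a Fraïssé class of finite L-structures (relations holding only on tuples of pairwise distinct elements) satisfying the Substructure Free Amalgamation Property (SFAP). Let K^< be the ordered expansion of K: the class of all finite structures in the language L ∪ {<} whose L-reduct lies in K and in which < is a strict linear order. Then K^< is a Fraïssé class and every Fraïssé limit M of K^< is indivisible: for every k ≥ 1, every coloring c : M → {0, …, k−1}, and every element a of M, there is an (L ∪ {<})-embedding f : M → M such that c is constant on { f(x) : x realizes the same quantifier-free 1-type over the empty set as a }. -/

import Mathlib

/-!
Amalgamation in `K^<`: a free amalgam of the reducts is ordered along a weight function with values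
in `ℕ` that merges the two given linear orders over their common part (`exists_weights`).

Indivisibility rests on a reading of SFAP in terms of forbidden structures: a structure is in `K`
as soon as some two (`mem_of_pair`) or three (`mem_of_triple`) of its points lie in no common
related tuple and removing any one of these points leaves a member of `K`. Let `S` be a finite
subset of the limit `M` and `m` a point outside `S` with the same type over the empty set as `a`.
The cone over `S` is the structure on `S ⊕ M` in which every point `x : M` of that type has over `S`
the type of `m`, the other points of `M` are unrelated to `S`, no related tuple contains a point of
`S` and two points of `M`, and all of `M` is inserted in the cut of `m` in `S`. A finite
substructure of the cone in which no such pair or triple exists embeds in `M`, so the age of the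
cone lies in `K^<` (`restr_cone_mem`). By the extension property the cone then embeds in `M` over
`S`, so that a copy of `M` has all its points of the type of `a` among the realizations of the type
of `m` over `S` (`exists_copy`).

Given a coloring and a color `i`, one tries to build point by point a copy of `M` whose points of
the type of `a` have color `i`. Either this succeeds (`greedy`), or it gets stuck at some finite `S`
and some `m` such that no realization of the type of `m` over `S` has color `i`. The copy provided
by `exists_copy` then misses the color `i`, and induction on the number of colors applies
(`indivisible`).
-/

open FirstOrder FirstOrder.Language FirstOrder.Language.Structure CategoryTheory

universe u v w

namespace CDP

variable {L : FirstOrder.Language.{u, v}}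

/-- `x` realizes the same quantifier-free 1-type over the empty set as `a`. -/
def SameEmptyType {M : Type*} [L.Structure M] (a x : M) : Prop :=
  ∀ {n : ℕ} (R : L.Relations n),
    RelMap R (fun _ : Fin n => x) ↔ RelMap R (fun _ : Fin n => a)

/-- All relations hold only on tuples of pairwise distinct elements. -/
def NoLoops (M : Type*) [L.Structure M] : Prop :=
  ∀ {n : ℕ} (R : L.Relations n) (t : Fin n → M), RelMap R t → Function.Injective t

/-- `D` is an extension of `B` (via the embedding `f`) by exactly the one new vertex `v`. -/
def IsOnePointExt {B D : Type*} [L.Structure B] [L.Structure D]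
    (f : B ↪[L] D) (v : D) : Prop :=
  v ∉ Set.range ⇑f ∧ ∀ d : D, d = v ∨ d ∈ Set.range ⇑f

/-- `C` is an extension of `A` (via the embedding `f`) by exactly the two new vertices `v, w`. -/
def IsTwoPointExt {A C : Type*} [L.Structure A] [L.Structure C]
    (f : A ↪[L] C) (v w : C) : Prop :=
  v ≠ w ∧ v ∉ Set.range ⇑f ∧ w ∉ Set.range ⇑f ∧
    ∀ c : C, c = v ∨ c = w ∨ c ∈ Set.range ⇑f

/-- The quantifier-free 1-type of `v` over (the copy via `f` of) `A` in `D` equals the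
quantifier-free 1-type of `u` over (the copy via `g` of) `A` in `E`; here `none` stands
for the distinguished new point. -/
def QF1Eq {A D E : Type*} [L.Structure A] [L.Structure D] [L.Structure E]
    (f : A ↪[L] D) (v : D) (g : A ↪[L] E) (u : E) : Prop :=
  ∀ {n : ℕ} (R : L.Relations n) (t : Fin n → Option A),
    RelMap R (fun i => (t i).elim v ⇑f) ↔ RelMap R (fun i => (t i).elim u ⇑g)

/-- The substructure of `D` on (the copy of) `A ∪ {v, w}` is isomorphic to the substructure of
`E` on `A ∪ {v', w'}` by the identity on `A` together with `v ↦ v'`, `w ↦ w'`. -/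
def QF2Eq {A D E : Type*} [L.Structure A] [L.Structure D] [L.Structure E]
    (f : A ↪[L] D) (v w : D) (g : A ↪[L] E) (v' w' : E) : Prop :=
  ∀ {n : ℕ} (R : L.Relations n) (t : Fin n → A ⊕ Fin 2),
    RelMap R (fun i => Sum.elim (⇑f) ![v, w] (t i)) ↔
      RelMap R (fun i => Sum.elim (⇑g) ![v', w'] (t i))

variable (K : Set (Bundled.{w} L.Structure))

/-- The disjoint (strong) amalgamation property. -/
def DAP : Prop :=
  ∀ A B C : Bundled.{w} L.Structure, A ∈ K → B ∈ K → C ∈ K →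
    ∀ (f : A ↪[L] B) (g : A ↪[L] C),
      ∃ D : Bundled.{w} L.Structure, D ∈ K ∧
        ∃ (r : B ↪[L] D) (s : C ↪[L] D),
          r.comp f = s.comp g ∧
          Set.range ⇑r ∩ Set.range ⇑s = Set.range ⇑(r.comp f)

/-- The free amalgamation property: a disjoint amalgam in which no tuple satisfying a relation
contains elements of both `range r ∖ range (r ∘ f)` and `range s ∖ range (s ∘ g)`. -/
def FAP : Prop :=
  ∀ A B C : Bundled.{w} L.Structure, A ∈ K → B ∈ K → C ∈ K →
    ∀ (f : A ↪[L] B) (g : A ↪[L] C),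
      ∃ D : Bundled.{w} L.Structure, D ∈ K ∧
        ∃ (r : B ↪[L] D) (s : C ↪[L] D),
          r.comp f = s.comp g ∧
          Set.range ⇑r ∩ Set.range ⇑s = Set.range ⇑(r.comp f) ∧
          ∀ {n : ℕ} (R : L.Relations n) (t : Fin n → D), RelMap R t →
            ¬ ((∃ i, t i ∈ Set.range ⇑r \ Set.range ⇑(r.comp f)) ∧
               (∃ j, t j ∈ Set.range ⇑s \ Set.range ⇑(s.comp g)))

/-- The Substructure Free Amalgamation Property (SFAP). -/
def SFAP : Prop :=
  FAP K ∧
  ∀ A C : Bundled.{w} L.Structure, A ∈ K → C ∈ K →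
  ∀ (iAC : A ↪[L] C) (v w : C), IsTwoPointExt iAC v w →
  ∀ B : Bundled.{w} L.Structure, B ∈ K → ∀ iAB : A ↪[L] B,
  -- σ : a quantifier-free 1-type over B realized in a member Bσ of K,
  -- with σ ↾ A = qftp(v / A)
  ∀ Bσ : Bundled.{w} L.Structure, Bσ ∈ K →
    ∀ (jσ : B ↪[L] Bσ) (vσ : Bσ), IsOnePointExt jσ vσ →
      QF1Eq (jσ.comp iAB) vσ iAC v →
  -- τ : a quantifier-free 1-type over B realized in a member Bτ of K,
  -- with τ ↾ A = qftp(w / A)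
  ∀ Bτ : Bundled.{w} L.Structure, Bτ ∈ K →
    ∀ (jτ : B ↪[L] Bτ) (wτ : Bτ), IsOnePointExt jτ wτ →
      QF1Eq (jτ.comp iAB) wτ iAC w →
  -- D extends B by one vertex v' with qftp(v'/B) = σ
  ∀ D : Bundled.{w} L.Structure, D ∈ K →
    ∀ (iBD : B ↪[L] D) (v' : D), IsOnePointExt iBD v' →
      QF1Eq iBD v' jσ vσ →
  -- conclusion: E extends D by one vertex w' with qftp(w'/B) = τ,
  -- E ↾ (A ∪ {v', w'}) ≅ C, and E adds no other relations over D
  ∃ E : Bundled.{w} L.Structure, E ∈ K ∧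
    ∃ (iDE : D ↪[L] E) (w' : E),
      IsOnePointExt iDE w' ∧
      QF1Eq (iDE.comp iBD) w' jτ wτ ∧
      QF2Eq ((iDE.comp iBD).comp iAB) (iDE v') w' iAC v w ∧
      (∀ {n : ℕ} (R : L.Relations n) (t : Fin n → E), RelMap R t →
        (∀ i, t i ∈ Set.range ⇑iDE) ∨
        (∀ i, t i = w' ∨ t i ∈ Set.range ⇑(iDE.comp iBD)) ∨
        (∀ i, t i = w' ∨ t i = iDE v' ∨ t i ∈ Set.range ⇑((iDE.comp iBD).comp iAB)))

/-- The body of SDAP, for a given choice of witnesses `A'`, `C'` (with the connecting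
embeddings): `C'` is a disjoint amalgam of `A'` and `C` over `A` extending `A'` by the two
vertices `iCC' v`, `iCC' w`, and any two 1-types over a structure `B ⊇ A'` extending the
types of these two vertices over `A'` can be realized consecutively yielding a copy of `C`
over `A`. -/
def SDAPWitness {A C : Bundled.{w} L.Structure} (iAC : A ↪[L] C) (v w : C)
    (A' C' : Bundled.{w} L.Structure) (iAA' : A ↪[L] A') (iA'C' : A' ↪[L] C')
    (iCC' : C ↪[L] C') : Prop :=
  iA'C'.comp iAA' = iCC'.comp iAC ∧
  Set.range ⇑iA'C' ∩ Set.range ⇑iCC' = Set.range ⇑(iA'C'.comp iAA') ∧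
  IsTwoPointExt iA'C' (iCC' v) (iCC' w) ∧
  ∀ B : Bundled.{w} L.Structure, B ∈ K → ∀ iA'B : A' ↪[L] B,
  ∀ Bσ : Bundled.{w} L.Structure, Bσ ∈ K →
    ∀ (jσ : B ↪[L] Bσ) (vσ : Bσ), IsOnePointExt jσ vσ →
      QF1Eq (jσ.comp iA'B) vσ iA'C' (iCC' v) →
  ∀ Bτ : Bundled.{w} L.Structure, Bτ ∈ K →
    ∀ (jτ : B ↪[L] Bτ) (wτ : Bτ), IsOnePointExt jτ wτ →
      QF1Eq (jτ.comp iA'B) wτ iA'C' (iCC' w) →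
  ∀ D : Bundled.{w} L.Structure, D ∈ K →
    ∀ (iBD : B ↪[L] D) (v'' : D), IsOnePointExt iBD v'' →
      QF1Eq iBD v'' jσ vσ →
  ∃ E : Bundled.{w} L.Structure, E ∈ K ∧
    ∃ (iDE : D ↪[L] E) (w'' : E),
      IsOnePointExt iDE w'' ∧
      QF1Eq (iDE.comp iBD) w'' jτ wτ ∧
      QF2Eq (((iDE.comp iBD).comp iA'B).comp iAA') (iDE v'') w'' iAC v w

/-- The Substructure Disjoint Amalgamation Property (SDAP). -/
def SDAP : Prop :=
  DAP K ∧
  ∀ A C : Bundled.{w} L.Structure, A ∈ K → C ∈ K →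
    ∀ (iAC : A ↪[L] C) (v w : C), IsTwoPointExt iAC v w →
      ∃ A' C' : Bundled.{w} L.Structure, A' ∈ K ∧ C' ∈ K ∧
        ∃ (iAA' : A ↪[L] A') (iA'C' : A' ↪[L] C') (iCC' : C ↪[L] C'),
          SDAPWitness K iAC v w A' C' iAA' iA'C' iCC'

/-- A Fraïssé class: a nonempty class of finite structures, closed under isomorphism and
substructures (equivalently, under embeddability of finite structures), with the joint
embedding and amalgamation properties. -/
def IsFraisseClass : Prop :=
  K.Nonempty ∧
  (∀ M ∈ K, Finite M) ∧
  (∀ M N : Bundled.{w} L.Structure, Nonempty (M ≃[L] N) → (M ∈ K ↔ N ∈ K)) ∧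
  (∀ M ∈ K, ∀ N : Bundled.{w} L.Structure, Nonempty (N ↪[L] M) → N ∈ K) ∧
  (∀ M ∈ K, ∀ N ∈ K, ∃ P ∈ K, Nonempty (M ↪[L] P) ∧ Nonempty (N ↪[L] P)) ∧
  (∀ A B C : Bundled.{w} L.Structure, A ∈ K → B ∈ K → C ∈ K →
    ∀ (f : A ↪[L] B) (g : A ↪[L] C),
      ∃ D : Bundled.{w} L.Structure, D ∈ K ∧
        ∃ (r : B ↪[L] D) (s : C ↪[L] D), r.comp f = s.comp g)

/-- `M` is a Fraïssé limit of `K`: a countably infinite ultrahomogeneous structure whose age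
(the class of finite structures embeddable in it) is `K`. -/
def IsFraisseLimitOf (M : Type w) [L.Structure M] : Prop :=
  Countable M ∧ Infinite M ∧ L.IsUltrahomogeneous M ∧
    ∀ N : Bundled.{w} L.Structure, N ∈ K ↔ (Finite N ∧ Nonempty (N ↪[L] M))

end CDP

namespace CDP

/-- The interpretation of the order symbol in a structure for the language `L.sum Language.order`. -/
def OrdRel {L : FirstOrder.Language.{u, v}} {N : Type*}
    [(L.sum Language.order).Structure N] (a b : N) : Prop :=
  RelMap (L := L.sum Language.order) (Sum.inr leSymb) ![a, b]

/-- The ordered expansion `K^<` of a class `K` of `L`-structures: all structures in the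
language `L ∪ {<}` whose `L`-reduct lies in `K` and in which `<` is a strict linear order. -/
def orderedExpansion {L : FirstOrder.Language.{u, v}}
    (K : Set (CategoryTheory.Bundled.{w} L.Structure)) :
    Set (CategoryTheory.Bundled.{w} (L.sum Language.order).Structure) :=
  { N | (⟨N, (FirstOrder.Language.LHom.sumInl : L →ᴸ L.sum Language.order).reduct N⟩ :
          CategoryTheory.Bundled.{w} L.Structure) ∈ K ∧
        IsStrictTotalOrder N (OrdRel (L := L)) }

end CDP

namespace CDP

/-! ### Induced substructures and finite partial embeddings -/

section Induced

variable {L : FirstOrder.Language.{u, v}} [L.IsRelational]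

/-- The substructure induced on an arbitrary set of vertices, as a bundled structure; this exists
for every set because the language is relational. -/
def restr {W : Type w} [L.Structure W] (T : Set W) : Bundled.{w} L.Structure :=
  ⟨T, { funMap := fun F _ => isEmptyElim F
        RelMap := fun R t => RelMap R (fun i => (t i : W)) }⟩

/-- An embedding in a relational language, from injectivity and preservation of relations. -/
def mkEmb {A B : Type*} [L.Structure A] [L.Structure B] (f : A → B) (hf : Function.Injective f)
    (hR : ∀ {n : ℕ} (R : L.Relations n) (t : Fin n → A), RelMap R (f ∘ t) ↔ RelMap R t) :
    A ↪[L] B where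
  toFun := f
  inj' := hf
  map_fun' F _ := isEmptyElim F
  map_rel' R t := hR R t

/-- The inclusion between induced substructures. -/
def incl {W : Type w} [L.Structure W] {S T : Set W} (h : S ⊆ T) :
    restr (L := L) S ↪[L] restr (L := L) T :=
  mkEmb (A := restr (L := L) S) (B := restr (L := L) T) (Set.inclusion h)
    (Set.inclusion_injective h) (fun _ _ => Iff.rfl)

/-- `g` restricted to `S` is an isomorphism onto its image. -/
def EmbOn (L : FirstOrder.Language.{u, v}) {W M : Type*} [L.Structure W] [L.Structure M]
    (S : Set W) (g : W → M) : Prop :=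
  Set.InjOn g S ∧ ∀ (n : ℕ) (R : L.Relations n) (t : Fin n → W), (∀ i, t i ∈ S) →
    (RelMap R (g ∘ t) ↔ RelMap R t)

theorem EmbOn.restr_mem {K : Set (Bundled.{w} L.Structure)} (hK : IsFraisseClass K)
    {W : Type w} [L.Structure W] {S : Set W} {N : Bundled.{w} L.Structure} (hN : N ∈ K)
    {g : W → N} (hg : EmbOn L S g) : restr (L := L) S ∈ K := by
  refine hK.2.2.2.1 N hN _ ⟨mkEmb (A := restr (L := L) S) (fun x => g x.1) ?_ ?_⟩
  · intro x y h
    exact Subtype.ext (hg.1 x.2 y.2 h)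
  · intro n R t
    exact hg.2 n R (fun i => (t i).1) (fun i => (t i).2)

/-- In an ultrahomogeneous structure, two finite families with the same quantifier-free type are
conjugate under an automorphism. -/
theorem exists_aut {M : Type*} [L.Structure M] (hM : L.IsUltrahomogeneous M) {I : Type*} [Finite I]
    (p q : I → M) (hpq : ∀ i j, p i = p j ↔ q i = q j)
    (hR : ∀ (n : ℕ) (R : L.Relations n) (t : Fin n → I),
      RelMap R (q ∘ t) ↔ RelMap R (p ∘ t)) :
    ∃ h : M ≃[L] M, ∀ i, h (p i) = q i := by
  classical
  let S : L.Substructure M := Substructure.closure L (Set.range p)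
  have hS : ∀ x : S, ∃ i, p i = x := fun x =>
    (Substructure.mem_closure_iff_of_isRelational L (Set.range p) x.1).1 x.2
  have hpS : ∀ i, p i ∈ S := fun i => Substructure.subset_closure ⟨i, rfl⟩
  choose k hk using hS
  have hfg : S.FG := Substructure.fg_closure (Set.finite_range p)
  obtain ⟨h, hh⟩ := hM S hfg (mkEmb (fun x => q (k x)) (by
      intro x y hxy
      apply Subtype.ext
      rw [← hk x, ← hk y]
      exact (hpq _ _).2 hxy) (by
      intro n R t
      have h1 := hR n R (k ∘ t)
      have h2 : p ∘ k ∘ t = fun i => (t i : M) := by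
        funext i; exact hk (t i)
      rw [h2] at h1
      exact h1))
  refine ⟨h, fun i => ?_⟩
  have := congrArg (fun e : S ↪[L] M => e ⟨p i, hpS i⟩) hh
  have h1 : q (k ⟨p i, hpS i⟩) = h (p i) := this
  rw [← h1]
  exact (hpq _ _).1 (hk ⟨p i, hpS i⟩)

/-- A total embedding satisfying a pointwise constraint is built from finite partial embeddings
satisfying it, if each of these extends to any further point. The empty partial map is an embedding
only if the two structures agree on nullary relations, which is what `H0` says. -/
theorem greedy {W M : Type*} [L.Structure W] [L.Structure M] [Countable W] [Nonempty M]
    (good : W → M → Prop)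
    (H : ∀ (S : Set W) (g : W → M), S.Finite → EmbOn L S g → (∀ x ∈ S, good x (g x)) →
      ∀ w ∉ S, ∃ g' : W → M, Set.EqOn g' g S ∧ EmbOn L (insert w S) g' ∧ good w (g' w))
    (H0 : EmbOn L (∅ : Set W) (fun _ => Classical.arbitrary M)) :
    ∃ f : W ↪[L] M, ∀ x, good x (f x) := by
  classical
  -- a finite partial embedding satisfying the constraint
  let St := { p : Set W × (W → M) // p.1.Finite ∧ EmbOn L p.1 p.2 ∧ ∀ x ∈ p.1, good x (p.2 x) }
  have step : ∀ (p : St) (w : W), ∃ p' : St,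
      w ∈ p'.1.1 ∧ p.1.1 ⊆ p'.1.1 ∧ Set.EqOn p'.1.2 p.1.2 p.1.1 := by
    rintro ⟨⟨S, g⟩, hS, hg, hgood⟩ w
    by_cases hw : w ∈ S
    · exact ⟨⟨⟨S, g⟩, hS, hg, hgood⟩, hw, subset_rfl, fun _ _ => rfl⟩
    · obtain ⟨g', h1, h2, h3⟩ := H S g hS hg hgood w hw
      refine ⟨⟨⟨insert w S, g'⟩, hS.insert w, h2, ?_⟩, Set.mem_insert _ _,
        Set.subset_insert _ _, h1⟩
      intro x hx
      rcases hx with rfl | hx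
      · exact h3
      · simpa only [h1 hx] using hgood x hx
  choose next hn1 hn2 hn3 using step
  rcases isEmpty_or_nonempty W with hW | hW
  · refine ⟨mkEmb (fun x => isEmptyElim x) (fun x => isEmptyElim x) ?_, fun x => isEmptyElim x⟩
    intro n R t
    have h2 := H0.2 n R t (fun i => isEmptyElim (t i))
    have h3 : ((fun x => isEmptyElim x : W → M) ∘ t) = (fun _ => Classical.arbitrary M) ∘ t := by
      funext i; exact isEmptyElim (t i)
    rw [h3]; exact h2
  obtain ⟨e, he⟩ := exists_surjective_nat W
  let p0 : St := ⟨⟨∅, fun _ => Classical.arbitrary M⟩, Set.finite_empty, H0,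
    fun x hx => absurd hx (Set.notMem_empty x)⟩
  let s : ℕ → St := fun n => Nat.rec p0 (fun n p => next p (e n)) n
  have hs : ∀ n, s (n + 1) = next (s n) (e n) := fun n => rfl
  have hmono : ∀ m n, m ≤ n → (s m).1.1 ⊆ (s n).1.1 ∧ Set.EqOn (s n).1.2 (s m).1.2 (s m).1.1 := by
    intro m n hmn
    induction n, hmn using Nat.le_induction with
    | base => exact ⟨subset_rfl, fun _ _ => rfl⟩
    | succ n hmn ih =>
      rw [hs]
      refine ⟨ih.1.trans (hn2 _ _), fun x hx => ?_⟩
      rw [hn3 _ _ (ih.1 hx), ih.2 hx]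
  choose d hd using he
  have hmem : ∀ x, ∀ n, d x + 1 ≤ n → x ∈ (s n).1.1 := by
    intro x n hn
    apply (hmono _ _ hn).1
    rw [hs]
    have := hn1 (s (d x)) (e (d x))
    rwa [hd x] at this ⊢
  let f : W → M := fun x => (s (d x + 1)).1.2 x
  have hf : ∀ x n, d x + 1 ≤ n → f x = (s n).1.2 x := fun x n hn =>
    ((hmono _ _ hn).2 (hmem x _ le_rfl)).symm
  refine ⟨mkEmb f ?_ ?_, fun x => (s (d x + 1)).2.2.2 x (hmem x _ le_rfl)⟩
  · intro x y hxy
    have hx := le_max_left (d x + 1) (d y + 1)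
    have hy := le_max_right (d x + 1) (d y + 1)
    rw [hf x _ hx, hf y _ hy] at hxy
    exact (s _).2.2.1.1 (hmem x _ hx) (hmem y _ hy) hxy
  · intro n R t
    let N := Finset.univ.sup (fun i => d (t i) + 1)
    have hN : ∀ i, d (t i) + 1 ≤ N := fun i =>
      Finset.le_sup (f := fun i => d (t i) + 1) (Finset.mem_univ i)
    have h1 : f ∘ t = (s N).1.2 ∘ t := by
      funext i; exact hf _ _ (hN i)
    rw [h1]
    exact (s N).2.2.1.2 n R t (fun i => hmem _ _ (hN i))

/-- Extension property of a Fraïssé limit `M`: a finite partial embedding into `M` extends by a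
point whenever the enlarged finite domain is in the age of `M`. -/
theorem extend_point {K : Set (Bundled.{w} L.Structure)} {M : Type w} [L.Structure M]
    (hM : IsFraisseLimitOf K M) {W : Type w} [L.Structure W] {S : Set W} (hS : S.Finite)
    {g : W → M} (hg : EmbOn L S g) {x : W} (hK : restr (L := L) (insert x S) ∈ K) :
    ∃ g' : W → M, Set.EqOn g' g S ∧ EmbOn L (insert x S) g' := by
  classical
  obtain ⟨e⟩ := ((hM.2.2.2 _).1 hK).2
  have := hS.to_subtype
  have hsub : ∀ i : S, i.1 ∈ insert x S := fun i => Set.mem_insert_of_mem _ i.2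
  have e_rel : ∀ (n : ℕ) (R : L.Relations n) (t : Fin n → W) (ht : ∀ i, t i ∈ insert x S),
      RelMap R (fun i => e ⟨t i, ht i⟩) ↔ RelMap R t := fun n R t ht =>
    e.map_rel R (fun i => ⟨t i, ht i⟩)
  obtain ⟨h, hh⟩ := exists_aut hM.2.2.1 (I := S) (fun i => e ⟨i.1, hsub i⟩) (fun i => g i.1)
    (by
      intro i j
      constructor
      · intro hij
        have := congrArg Subtype.val (e.injective hij)
        exact congrArg g this
      · intro hij
        have := hg.1 i.2 j.2 hij
        have h2 : i = j := Subtype.ext this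
        rw [h2])
    (by
      intro n R t
      exact (hg.2 n R (fun i => (t i).1) (fun i => (t i).2)).trans
        (e_rel n R (fun i => (t i).1) (fun i => hsub (t i))).symm)
  refine ⟨fun w => if hw : w ∈ insert x S then h (e ⟨w, hw⟩) else g w, ?_, ?_, ?_⟩
  · intro y hy
    have hy' : y ∈ insert x S := Set.mem_insert_of_mem _ hy
    simp only [hy', dif_pos]
    exact hh ⟨y, hy⟩
  · intro y hy z hz hyz
    simp only [hy, hz, dif_pos] at hyz
    exact congrArg Subtype.val (e.injective (h.injective hyz))
  · intro n R t ht
    have h1 : (fun w => if hw : w ∈ insert x S then h (e ⟨w, hw⟩) else g w) ∘ t =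
        h ∘ (fun i => e ⟨t i, ht i⟩) := by
      funext i; simp only [Function.comp, ht i, dif_pos]
    rw [h1, h.map_rel]
    exact e_rel n R t ht

/-- A countable structure embeds in the Fraïssé limit when all its finite substructures lie in
the class. -/
theorem exists_embedding {K : Set (Bundled.{w} L.Structure)} {M : Type w} [L.Structure M]
    (hM : IsFraisseLimitOf K M) {W : Type w} [L.Structure W] [Countable W]
    (hW : ∀ T : Set W, T.Finite → restr (L := L) T ∈ K) : Nonempty (W ↪[L] M) := by
  have := hM.2.1
  obtain ⟨f, -⟩ := greedy (L := L) (W := W) (M := M) (fun _ _ => True)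
    (by
      intro S g hS hg _ w _
      obtain ⟨g', h1, h2⟩ := extend_point hM hS hg (x := w) (hW _ (hS.insert w))
      exact ⟨g', h1, h2, trivial⟩)
    (by
      refine ⟨Set.injOn_empty _, fun n R t ht => ?_⟩
      obtain ⟨e⟩ := ((hM.2.2.2 _).1 (hW ∅ Set.finite_empty)).2
      have h1 := e.map_rel R (fun i => ⟨t i, ht i⟩)
      have h2 : ((fun _ => Classical.arbitrary M) ∘ t : Fin n → M) =
          e ∘ (fun i => ⟨t i, ht i⟩) := by
        funext i; exact absurd (ht i) (Set.notMem_empty _)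
      rw [h2]; exact h1)
  exact ⟨f⟩

end Induced

end CDP

namespace CDP

/-! ### Free amalgamation and SFAP as irreducibility of forbidden structures -/

section Irreducible

variable {L : FirstOrder.Language.{u, v}} [L.IsRelational]

/-- Free amalgamation in terms of forbidden substructures: if `f` and `x` lie in no common related
tuple and removing either of them leaves a member of `K`, the whole structure is in `K`. -/
theorem mem_of_pair {K : Set (Bundled.{w} L.Structure)} (hK : IsFraisseClass K) (hF : FAP K)
    {W : Type w} [L.Structure W] (T : Set W) {f x : W} (hfT : f ∈ T) (hxT : x ∈ T) (hfx : f ≠ x)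
    (hno : ∀ (n : ℕ) (R : L.Relations n) (t : Fin n → W), RelMap R t →
      (∃ i, t i = f) → (∃ i, t i = x) → False)
    (hf : restr (L := L) (T \ {f}) ∈ K) (hx : restr (L := L) (T \ {x}) ∈ K) :
    restr (L := L) T ∈ K := by
  classical
  have sf : T \ {f, x} ⊆ T \ {f} := Set.sdiff_subset_sdiff_right (by simp)
  have sx : T \ {f, x} ⊆ T \ {x} := Set.sdiff_subset_sdiff_right (by simp)
  have hA : restr (L := L) (T \ {f, x}) ∈ K := hK.2.2.2.1 _ hf _ ⟨incl sf⟩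
  obtain ⟨D, hD, r, s, hrs, hint, hfree⟩ := hF _ _ _ hA hx hf (incl sx) (incl sf)
  have hrs' : ∀ a (h : a ∈ T \ {f, x}), r ⟨a, sx h⟩ = s ⟨a, sf h⟩ := fun a h =>
    congrArg (fun e : restr (L := L) (T \ {f, x}) ↪[L] D => e ⟨a, h⟩) hrs
  have hx' : x ∈ T \ {f} := ⟨hxT, fun h => hfx h.symm⟩
  have hf' : f ∈ T \ {x} := ⟨hfT, fun h => hfx h⟩
  have hsx : s ⟨x, hx'⟩ ∉ Set.range r := by
    intro h
    have : s ⟨x, hx'⟩ ∈ Set.range r ∩ Set.range s := ⟨h, ⟨_, rfl⟩⟩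
    rw [hint] at this
    obtain ⟨⟨a, ha⟩, hra⟩ := this
    have h1 : s ⟨a, sf ha⟩ = s ⟨x, hx'⟩ := (hrs' a ha).symm.trans hra
    have h2 : a = x := congrArg Subtype.val (s.injective h1)
    exact ha.2 (by simp [h2])
  have hrf : r ⟨f, hf'⟩ ∉ Set.range s := by
    intro h
    have : r ⟨f, hf'⟩ ∈ Set.range r ∩ Set.range s := ⟨⟨_, rfl⟩, h⟩
    rw [hint] at this
    obtain ⟨⟨a, ha⟩, hra⟩ := this
    have h2 : a = f := congrArg Subtype.val (r.injective hra)
    exact ha.2 (by simp [h2])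
  let φ : W → D := fun z =>
    if hz : z ∈ T \ {x} then r ⟨z, hz⟩ else s ⟨x, hx'⟩
  have φr : ∀ z (hz : z ∈ T \ {x}), φ z = r ⟨z, hz⟩ := fun z hz => dif_pos hz
  have φx : φ x = s ⟨x, hx'⟩ := dif_neg (fun h => h.2 rfl)
  have φs : ∀ z (hz : z ∈ T \ {f}), φ z = s ⟨z, hz⟩ := by
    intro z hz
    by_cases hzx : z = x
    · subst hzx; exact φx
    · rw [φr z ⟨hz.1, hzx⟩]
      exact hrs' z ⟨hz.1, by simpa [hzx] using hz.2⟩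
  refine EmbOn.restr_mem hK hD (g := φ) ⟨?_, ?_⟩
  · intro y hy z hz hyz
    by_cases hyx : y = x <;> by_cases hzx : z = x
    · rw [hyx, hzx]
    · rw [hyx, φx, φr z ⟨hz, hzx⟩] at hyz
      exact absurd ⟨_, hyz.symm⟩ hsx
    · rw [hzx, φx, φr y ⟨hy, hyx⟩] at hyz
      exact absurd ⟨_, hyz⟩ hsx
    · rw [φr y ⟨hy, hyx⟩, φr z ⟨hz, hzx⟩] at hyz
      exact congrArg Subtype.val (r.injective hyz)
  · intro n R t ht
    by_cases h1 : ∃ i, t i = x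
    · by_cases h2 : ∃ i, t i = f
      · refine ⟨fun h => ?_, fun h => (hno n R t h h2 h1).elim⟩
        obtain ⟨i, hi⟩ := h1
        obtain ⟨j, hj⟩ := h2
        refine (hfree R _ h ⟨⟨j, ?_, ?_⟩, ⟨i, ?_, ?_⟩⟩).elim
        · rw [Function.comp, hj, φr f hf']; exact ⟨_, rfl⟩
        · rw [Function.comp, hj, φr f hf']
          rintro ⟨a, ha⟩
          apply hrf
          rw [← ha, hrs]
          exact ⟨_, rfl⟩
        · rw [Function.comp, hi, φx]; exact ⟨_, rfl⟩
        · rw [Function.comp, hi, φx]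
          rintro ⟨a, ha⟩
          apply hsx
          rw [← ha, ← hrs]
          exact ⟨_, rfl⟩
      · have ht' : ∀ i, t i ∈ T \ {f} := fun i => ⟨ht i, fun h => h2 ⟨i, h⟩⟩
        have e1 : φ ∘ t = s ∘ (fun i => ⟨t i, ht' i⟩) := by
          funext i; exact φs _ (ht' i)
        rw [e1]
        exact s.map_rel R (fun i => ⟨t i, ht' i⟩)
    · have ht' : ∀ i, t i ∈ T \ {x} := fun i => ⟨ht i, fun h => h1 ⟨i, h⟩⟩
      have e1 : φ ∘ t = r ∘ (fun i => ⟨t i, ht' i⟩) := by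
        funext i; exact φr _ (ht' i)
      rw [e1]
      exact r.map_rel R (fun i => ⟨t i, ht' i⟩)

/-- SFAP in terms of forbidden substructures: if three points lie in no common related tuple and
removing any one of them leaves a member of `K`, the whole structure is in `K`. -/
theorem mem_of_triple {K : Set (Bundled.{w} L.Structure)} (hK : IsFraisseClass K) (hS : SFAP K)
    {W : Type w} [L.Structure W] (T : Set W) {f x y : W} (hfT : f ∈ T) (hxT : x ∈ T) (hyT : y ∈ T)
    (hfx : f ≠ x) (hfy : f ≠ y) (hxy : x ≠ y)
    (hno : ∀ (n : ℕ) (R : L.Relations n) (t : Fin n → W), RelMap R t →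
      (∃ i, t i = f) → (∃ i, t i = x) → (∃ i, t i = y) → False)
    (hf : restr (L := L) (T \ {f}) ∈ K) (hx : restr (L := L) (T \ {x}) ∈ K)
    (hy : restr (L := L) (T \ {y}) ∈ K) :
    restr (L := L) T ∈ K := by
  classical
  -- `C = T \ {f}`, `Bτ = T \ {x}`, `Bσ = D = T \ {y}`, `B = T \ {x, y}`, `A = T \ {f, x, y}`
  have sAC : T \ {f, x, y} ⊆ T \ {f} := Set.sdiff_subset_sdiff_right (by simp)
  have sAB : T \ {f, x, y} ⊆ T \ {x, y} := Set.sdiff_subset_sdiff_right (by simp)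
  have sBx : T \ {x, y} ⊆ T \ {x} := Set.sdiff_subset_sdiff_right (by simp)
  have sBy : T \ {x, y} ⊆ T \ {y} := Set.sdiff_subset_sdiff_right (by simp)
  have hA : restr (L := L) (T \ {f, x, y}) ∈ K := hK.2.2.2.1 _ hf _ ⟨incl sAC⟩
  have hB : restr (L := L) (T \ {x, y}) ∈ K := hK.2.2.2.1 _ hx _ ⟨incl sBx⟩
  have xC : x ∈ T \ {f} := ⟨hxT, fun h => hfx h.symm⟩
  have yC : y ∈ T \ {f} := ⟨hyT, fun h => hfy h.symm⟩
  have xD : x ∈ T \ {y} := ⟨hxT, hxy⟩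
  have yX : y ∈ T \ {x} := ⟨hyT, fun h => hxy h.symm⟩
  have qf : ∀ {S U V : Set W} (h1 : S ⊆ U) (h2 : S ⊆ V) (z : W) (hz : z ∈ U) (hz' : z ∈ V),
      QF1Eq (D := restr (L := L) U) (E := restr (L := L) V) (incl h1) ⟨z, hz⟩
        (incl h2) ⟨z, hz'⟩ := by
    intro S U V h1 h2 z hz hz' n R t
    have e : (fun i => (((t i).elim (⟨z, hz⟩ : restr (L := L) U) (incl h1)).1 : W)) =
        fun i => (((t i).elim (⟨z, hz'⟩ : restr (L := L) V) (incl h2)).1 : W) := by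
      funext i
      cases t i <;> rfl
    change RelMap R (fun i => (((t i).elim (⟨z, hz⟩ : restr (L := L) U) (incl h1)).1 : W)) ↔
      RelMap R (fun i => (((t i).elim (⟨z, hz'⟩ : restr (L := L) V) (incl h2)).1 : W))
    rw [e]
  have onept : ∀ (U V : Set W) (h : U ⊆ V) (z : W) (hz : z ∈ V), z ∉ U →
      (∀ a ∈ V, a = z ∨ a ∈ U) →
      IsOnePointExt (D := restr (L := L) V) (incl h) ⟨z, hz⟩ := by
    intro U V h z hz hzU hV
    refine ⟨?_, ?_⟩
    · rintro ⟨a, ha⟩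
      have : a.1 = z := congrArg Subtype.val ha
      exact hzU (this ▸ a.2)
    · rintro ⟨a, ha⟩
      rcases hV a ha with h1 | h1
      · exact Or.inl (Subtype.ext h1)
      · exact Or.inr ⟨⟨a, h1⟩, rfl⟩
  have one_y : IsOnePointExt (D := restr (L := L) (T \ {y})) (incl sBy) ⟨x, xD⟩ :=
    onept _ _ sBy x xD (by simp) (by
      rintro a ⟨h1, h2⟩
      by_cases hax : a = x
      · exact Or.inl hax
      · exact Or.inr ⟨h1, by simpa [hax] using h2⟩)
  have one_x : IsOnePointExt (D := restr (L := L) (T \ {x})) (incl sBx) ⟨y, yX⟩ :=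
    onept _ _ sBx y yX (by simp) (by
      rintro a ⟨h1, h2⟩
      by_cases hay : a = y
      · exact Or.inl hay
      · exact Or.inr ⟨h1, by simpa [hay] using h2⟩)
  obtain ⟨E, hE, iDE, w', ⟨hw', -⟩, hτ, h2, hfree⟩ := hS.2 _ _ hA hf (incl sAC) ⟨x, xC⟩ ⟨y, yC⟩
    (by
      refine ⟨fun h => hxy (congrArg Subtype.val h), ?_, ?_, ?_⟩
      · rintro ⟨a, ha⟩
        have : a.1 = x := congrArg Subtype.val ha
        exact a.2.2 (by simp [this])
      · rintro ⟨a, ha⟩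
        have : a.1 = y := congrArg Subtype.val ha
        exact a.2.2 (by simp [this])
      · rintro ⟨a, ha⟩
        by_cases hax : a = x
        · exact Or.inl (Subtype.ext hax)
        by_cases hay : a = y
        · exact Or.inr (Or.inl (Subtype.ext hay))
        · exact Or.inr (Or.inr ⟨⟨a, ha.1, by simpa [hax, hay] using ha.2⟩, rfl⟩))
    _ hB (incl sAB) _ hy (incl sBy) ⟨x, xD⟩ one_y (qf (sAB.trans sBy) sAC x xD xC)
    _ hx (incl sBx) ⟨y, yX⟩ one_x (qf (sAB.trans sBx) sAC y yX yC)
    _ hy (incl sBy) ⟨x, xD⟩ one_y (qf sBy sBy x xD xD)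
  let φ : W → E := fun z => if hz : z ∈ T \ {y} then iDE ⟨z, hz⟩ else w'
  have φD : ∀ z (hz : z ∈ T \ {y}), φ z = iDE ⟨z, hz⟩ := fun z hz => dif_pos hz
  have φy : φ y = w' := dif_neg (fun h => h.2 rfl)
  have φinj : Set.InjOn φ T := by
    intro a ha b hb hab
    by_cases hax : a = y <;> by_cases hbx : b = y
    · rw [hax, hbx]
    · rw [hax, φy, φD b ⟨hb, hbx⟩] at hab
      exact absurd ⟨_, hab.symm⟩ hw'
    · rw [hbx, φy, φD a ⟨ha, hax⟩] at hab
      exact absurd ⟨_, hab⟩ hw'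
    · rw [φD a ⟨ha, hax⟩, φD b ⟨hb, hbx⟩] at hab
      exact congrArg Subtype.val (iDE.injective hab)
  refine EmbOn.restr_mem hK hE (g := φ) ⟨φinj, ?_⟩
  intro n R t ht
  by_cases ky : ∃ i, t i = y
  swap
  · have ht' : ∀ i, t i ∈ T \ {y} := fun i => ⟨ht i, fun h => ky ⟨i, h⟩⟩
    have e1 : φ ∘ t = iDE ∘ (fun i => ⟨t i, ht' i⟩) := by
      funext i; exact φD _ (ht' i)
    rw [e1]
    exact iDE.map_rel R (fun i => ⟨t i, ht' i⟩)
  by_cases kx : ∃ i, t i = x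
  swap
  · -- the tuple avoids `x`: its truth value is given by the type of `y` over `B`
    have ht' : ∀ i, t i ≠ y → t i ∈ T \ {x, y} := fun i hi =>
      ⟨ht i, by simpa [hi] using fun h => kx ⟨i, h⟩⟩
    have := hτ R (fun i => if h : t i = y then none else some ⟨t i, ht' i h⟩)
    refine Iff.trans ?_ (this.trans ?_)
    · apply iff_of_eq; congr 1; funext i
      by_cases h : t i = y
      · simp only [Function.comp, h, φy, dif_pos, Option.elim]
      · simp only [Function.comp, h, φD _ (sBy (ht' i h)), dif_neg, not_false_eq_true, Option.elim]
        rfl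
    · change RelMap R (fun i => (Option.elim _ _ _ : restr (L := L) (T \ {x})).1) ↔ _
      apply iff_of_eq; congr 1; funext i
      by_cases h : t i = y
      · simp only [h, dif_pos, Option.elim]
      · simp only [h, dif_neg, not_false_eq_true, Option.elim]
        rfl
  by_cases kf : ∃ i, t i = f
  swap
  · -- the tuple avoids `f`: its truth value is given by the isomorphism type of `C`
    have ht' : ∀ i, t i ≠ y → t i ≠ x → t i ∈ T \ {f, x, y} := fun i hi hj =>
      ⟨ht i, by simpa [hi, hj] using fun h => kf ⟨i, h⟩⟩
    have := h2 R (fun i => if h : t i = y then Sum.inr 1 else if h' : t i = x then Sum.inr 0 else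
      Sum.inl ⟨t i, ht' i h h'⟩)
    refine Iff.trans ?_ (this.trans ?_)
    · apply iff_of_eq; congr 1; funext i
      by_cases h : t i = y
      · simp only [Function.comp, h, φy, dif_pos]; rfl
      by_cases h' : t i = x
      · simp only [Function.comp, h', hxy, φD _ xD, dif_pos, dif_neg, not_false_eq_true]; rfl
      · simp only [Function.comp, h, h', φD _ (sBy (sAB (ht' i h h'))), dif_neg,
          not_false_eq_true]
        rfl
    · change RelMap R (fun i => (Sum.elim _ _ _ : restr (L := L) (T \ {f})).1) ↔ _
      apply iff_of_eq; congr 1; funext i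
      by_cases h : t i = y
      · simp only [h, dif_pos]; rfl
      by_cases h' : t i = x
      · simp only [h', hxy, dif_pos, dif_neg, not_false_eq_true]; rfl
      · simp only [h, h', dif_neg, not_false_eq_true]
        rfl
  refine ⟨fun h => ?_, fun h => (hno n R t h kf kx ky).elim⟩
  exfalso
  obtain ⟨i, hi⟩ := ky
  obtain ⟨j, hj⟩ := kx
  obtain ⟨k, hk⟩ := kf
  have fD : f ∈ T \ {y} := ⟨hfT, hfy⟩
  rcases hfree R _ h with h | h | h
  · have := h i
    rw [Function.comp, hi, φy] at this
    exact hw' this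
  · have := h j
    rw [Function.comp, hj, φD x xD] at this
    rcases this with h | ⟨a, ha⟩
    · exact hw' ⟨_, h⟩
    · have : a.1 = x := congrArg Subtype.val (iDE.injective ha)
      exact a.2.2 (by simp [this])
  · have := h k
    rw [Function.comp, hk, φD f fD] at this
    rcases this with h | h | ⟨a, ha⟩
    · exact hw' ⟨_, h⟩
    · exact hfx (congrArg Subtype.val (iDE.injective h))
    · have : a.1 = f := congrArg Subtype.val (iDE.injective ha)
      exact a.2.2 (by simp [this])

end Irreducible

end CDP

namespace CDP

/-! ### The ordered expansion is a Fraïssé class -/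

section Orders

/-- A strictly increasing map between strict total orders reflects the order. -/
theorem lt_iff_of_mono {α β : Type*} {r : α → α → Prop} {s : β → β → Prop}
    (hr : IsStrictTotalOrder α r) (hs : IsStrictTotalOrder β s) (f : α → β)
    (hf : ∀ a b, r a b → s (f a) (f b)) (a b : α) : s (f a) (f b) ↔ r a b := by
  refine ⟨fun h => ?_, hf a b⟩
  by_contra hab
  by_cases hba : r b a
  · exact hs.irrefl _ (hs.trans _ _ _ h (hf b a hba))
  · have := hr.trichotomous a b hab hba
    subst this
    exact hs.irrefl _ h

theorem isStrictTotalOrder_comap {α β : Type*} {s : β → β → Prop} (hs : IsStrictTotalOrder β s)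
    (f : α → β) (hf : Function.Injective f) : IsStrictTotalOrder α (fun a b => s (f a) (f b)) where
  irrefl a := hs.irrefl (f a)
  trans a b c := hs.trans (f a) (f b) (f c)
  trichotomous a b h1 h2 := hf (hs.trichotomous (f a) (f b) h1 h2)

theorem isStrictTotalOrder_lex {α β : Type*} {r : α → α → Prop} {s : β → β → Prop}
    (hr : IsStrictTotalOrder α r) (hs : IsStrictTotalOrder β s) :
    IsStrictTotalOrder (α × β) (fun a b => r a.1 b.1 ∨ a.1 = b.1 ∧ s a.2 b.2) where
  irrefl := by
    rintro a (h | h)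
    · exact hr.irrefl _ h
    · exact hs.irrefl _ h.2
  trans := by
    rintro ⟨a, a'⟩ ⟨b, b'⟩ ⟨c, c'⟩ (h | ⟨rfl, h⟩) (h' | ⟨h1, h'⟩)
    · exact Or.inl (hr.trans _ _ _ h h')
    · exact Or.inl (h1 ▸ h)
    · exact Or.inl h'
    · exact Or.inr ⟨h1, hs.trans _ _ _ h h'⟩
  trichotomous := by
    rintro ⟨a, a'⟩ ⟨b, b'⟩ h1 h2
    obtain rfl : a = b := hr.trichotomous a b (fun h => h1 (Or.inl h)) (fun h => h2 (Or.inl h))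
    obtain rfl : a' = b' := hs.trichotomous a' b' (fun h => h1 (Or.inr ⟨rfl, h⟩))
      (fun h => h2 (Or.inr ⟨rfl, h⟩))
    rfl

/-- A linear order refining a given `ℕ`-valued weight. -/
theorem exists_order_of_weight {D : Type*} (q : D → ℕ) :
    ∃ lt : D → D → Prop, IsStrictTotalOrder D lt ∧ ∀ a b, q a < q b → lt a b :=
  have h1 : IsStrictTotalOrder ℕ (· < ·) := inferInstance
  have h2 : IsStrictTotalOrder D WellOrderingRel := inferInstance
  ⟨_, isStrictTotalOrder_comap (isStrictTotalOrder_lex h1 h2) (fun d => (q d, d))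
    (fun _ _ h => congrArg Prod.snd h), fun _ _ h => Or.inl h⟩

theorem ncard_below_lt {X : Type*} [Finite X] {l : X → X → Prop} (hl : IsStrictTotalOrder X l)
    (x y : X) (hxy : l x y) : {z | l z x}.ncard < {z | l z y}.ncard := by
  apply Set.ncard_lt_ncard _ (Set.toFinite _)
  exact ⟨fun z hz => hl.trans _ _ _ hz hxy, fun h => hl.irrefl x (h hxy)⟩

/-- Two finite linear orders over a common suborder have strictly increasing weights agreeing
on that suborder. -/
theorem exists_weights {A B C : Type*} [Finite A] [Finite B] [Finite C]
    {lb : B → B → Prop} {lc : C → C → Prop}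
    (hb : IsStrictTotalOrder B lb) (hc : IsStrictTotalOrder C lc) (f : A → B) (g : A → C)
    (hfg : ∀ a a', lb (f a) (f a') ↔ lc (g a) (g a')) :
    ∃ (φ : B → ℕ) (ψ : C → ℕ), (∀ b b', lb b b' → φ b < φ b') ∧ (∀ c c', lc c c' → ψ c < ψ c') ∧
      ∀ a, φ (f a) = ψ (g a) := by
  classical
  have := Fintype.ofFinite A
  let rb : B → ℕ := fun b => {z | lb z b}.ncard
  let rc : C → ℕ := fun c => {z | lc z c}.ncard
  have hrb : ∀ b b', lb b b' → rb b < rb b' := ncard_below_lt hb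
  have hrc : ∀ c c', lc c c' → rc c < rc c' := ncard_below_lt hc
  let N := Nat.card C + 1
  have hN : ∀ c, rc c ≤ N := fun c => (Set.ncard_le_card _).trans (Nat.le_succ _)
  -- Weights on `B` are spaced by `N`, leaving room for the points of `C` in between: `ψ c` exceeds
  -- the weight of the last point of `A` below `c` by the number of steps taken in `C` since then.
  let h : A → ℕ := fun a => N * rb (f a) + N - rc (g a)
  have hmono : ∀ a a', lc (g a) (g a') → h a ≤ h a' := by
    intro a a' haa
    have h1 := hrb _ _ ((hfg a a').2 haa)
    have h2 := Nat.mul_le_mul_left N (Nat.succ_le_of_lt h1)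
    have h3 := hN (g a')
    have h4 : N * (rb (f a)).succ = N * rb (f a) + N := Nat.mul_succ _ _
    change N * rb (f a) + N - rc (g a) ≤ N * rb (f a') + N - rc (g a')
    omega
  let below : C → Finset A := fun c => Finset.univ.filter (fun a => ¬ lc c (g a))
  refine ⟨fun b => N * rb b + N, fun c => rc c + (below c).sup h, ?_, ?_, ?_⟩
  · intro b b' hbb
    have h1 := hrb _ _ hbb
    have h2 : N * rb b < N * rb b' := Nat.mul_lt_mul_of_pos_left h1 (Nat.succ_pos _)
    exact Nat.add_lt_add_right h2 N
  · intro c c' hcc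
    refine add_lt_add_of_lt_of_le (hrc _ _ hcc) (Finset.sup_mono ?_)
    intro a ha
    simp only [below, Finset.mem_filter, Finset.mem_univ, true_and] at ha ⊢
    exact fun h' => ha (hc.trans _ _ _ hcc h')
  · intro a
    have : (below (g a)).sup h = h a := by
      apply le_antisymm
      · refine Finset.sup_le fun a' ha' => ?_
        simp only [below, Finset.mem_filter, Finset.mem_univ, true_and] at ha'
        by_cases h1 : lc (g a') (g a)
        · exact hmono _ _ h1
        · have h2 := hc.trichotomous _ _ ha' h1
          have h3 : f a = f a' := hb.trichotomous _ _
            (fun h => ha' ((hfg _ _).1 h)) (fun h => h1 ((hfg _ _).1 h))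
          simp only [h, ← h2, ← h3, le_refl]
      · refine Finset.le_sup (f := h) ?_
        simp only [below, Finset.mem_filter, Finset.mem_univ, true_and]
        exact hc.irrefl _
    have h3 := hN (g a)
    change N * rb (f a) + N = rc (g a) + _
    rw [this]
    change N * rb (f a) + N = rc (g a) + (N * rb (f a) + N - rc (g a))
    omega

end Orders

section Expansion

variable {L : FirstOrder.Language.{u, v}}

/-- The reduct of an `L ∪ {<}`-structure to `L`. -/
def red (N : Bundled.{w} (L.sum Language.order).Structure) : Bundled.{w} L.Structure :=
  ⟨N, (FirstOrder.Language.LHom.sumInl : L →ᴸ L.sum Language.order).reduct N⟩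

/-- The expansion of an `L`-structure by a binary relation interpreting `<`. -/
def expand (D : Bundled.{w} L.Structure) (lt : D → D → Prop) :
    Bundled.{w} (L.sum Language.order).Structure :=
  ⟨D, { funMap := fun F t => match F with
          | Sum.inl F => funMap F t
          | Sum.inr F => F.elim
        RelMap := fun R t => match R with
          | Sum.inl R => RelMap R t
          | Sum.inr orderRel.le => lt (t 0) (t 1) }⟩

theorem expand_mem {K : Set (Bundled.{w} L.Structure)} {D : Bundled.{w} L.Structure}
    (hD : D ∈ K) {lt : D → D → Prop} (hlt : IsStrictTotalOrder D lt) :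
    expand D lt ∈ orderedExpansion K := by
  have h1 : red (expand D lt) = D := by
    unfold red
    rcases D with ⟨D, str⟩
    congr 1
  exact ⟨(h1.symm ▸ hD : red (expand D lt) ∈ K), hlt⟩

theorem relMap_order {N : Type*} [(L.sum Language.order).Structure N] (t : Fin 2 → N) :
    RelMap (L := L.sum Language.order) (Sum.inr orderRel.le) t ↔ OrdRel (L := L) (t 0) (t 1) := by
  have : t = ![t 0, t 1] := by
    funext i; fin_cases i <;> rfl
  conv_lhs => rw [this]
  rfl

theorem ordRel_emb {N P : Type*} [(L.sum Language.order).Structure N]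
    [(L.sum Language.order).Structure P] (f : N ↪[L.sum Language.order] P) (a b : N) :
    OrdRel (L := L) (f a) (f b) ↔ OrdRel (L := L) a b := by
  have := f.map_rel (Sum.inr orderRel.le : (L.sum Language.order).Relations 2) ![a, b]
  rw [relMap_order, relMap_order] at this
  exact this

variable [L.IsRelational]

/-- An embedding of expanded structures induces one of the reducts. -/
def redEmb {N P : Bundled.{w} (L.sum Language.order).Structure}
    (f : N ↪[L.sum Language.order] P) : red N ↪[L] red P :=
  mkEmb (A := red N) (B := red P) f f.injective
    (fun R t => f.map_rel (Sum.inl R : (L.sum Language.order).Relations _) t)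

/-- An embedding of reducts that preserves the order is an embedding of expanded structures. -/
def liftEmb {N P : Bundled.{w} (L.sum Language.order).Structure} (f : red N ↪[L] red P)
    (hf : ∀ a b : N, OrdRel (L := L) (N := P) (f a) (f b) ↔ OrdRel (L := L) a b) :
    N ↪[L.sum Language.order] P :=
  mkEmb (A := N) (B := P) f f.injective (by
    intro n R t
    match n, R, t with
    | _, Sum.inl R, t => exact f.map_rel R t
    | _, Sum.inr orderRel.le, t =>
      rw [relMap_order, relMap_order]
      exact hf _ _)

/-- A free amalgam of the reducts is ordered along weights extending both orders; points of equal
weight are ordered arbitrarily. -/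
theorem orderedExpansion_amalg {K : Set (Bundled.{w} L.Structure)} (hK : IsFraisseClass K)
    (hF : FAP K) (A B C : Bundled.{w} (L.sum Language.order).Structure)
    (hA : red A ∈ K) (hB : B ∈ orderedExpansion K)
    (hC : C ∈ orderedExpansion K) (f : A ↪[L.sum Language.order] B)
    (g : A ↪[L.sum Language.order] C) :
    ∃ D : Bundled.{w} (L.sum Language.order).Structure, D ∈ orderedExpansion K ∧
      ∃ (r : B ↪[L.sum Language.order] D) (s : C ↪[L.sum Language.order] D),
        r.comp f = s.comp g := by
  classical
  obtain ⟨D, hD, r, s, hrs, hint, -⟩ := hF (red A) (red B) (red C) hA hB.1 hC.1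
    (redEmb f) (redEmb g)
  have hrs' : ∀ a : A, r (f a) = s (g a) := fun a =>
    congrArg (fun e : red A ↪[L] D => e a) hrs
  have : Finite A := hK.2.1 _ hA
  have : Finite B := hK.2.1 _ hB.1
  have : Finite C := hK.2.1 _ hC.1
  obtain ⟨φ, ψ, hφ, hψ, hφψ⟩ := exists_weights hB.2 hC.2 f g
    (fun a a' => (ordRel_emb f a a').trans (ordRel_emb g a a').symm)
  let q : D → ℕ := fun d => if h : ∃ b : B, r b = d then φ h.choose else
    if h : ∃ c : C, s c = d then ψ h.choose else 0
  have qr : ∀ b : B, q (r b) = φ b := by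
    intro b
    have h : ∃ b' : B, r b' = r b := ⟨b, rfl⟩
    have h2 : h.choose = b := r.injective h.choose_spec
    exact (dif_pos h).trans (congrArg φ h2)
  have qs : ∀ c : C, q (s c) = ψ c := by
    intro c
    by_cases h : ∃ b : B, r b = s c
    · obtain ⟨b, hb⟩ := h
      have : s c ∈ Set.range r ∩ Set.range s := ⟨⟨b, hb⟩, ⟨c, rfl⟩⟩
      rw [hint] at this
      obtain ⟨a, ha⟩ := this
      have ha' : r (f a) = s c := ha
      have h1 : g a = c := s.injective ((hrs' a).symm.trans ha')
      rw [← ha', qr, ← h1]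
      exact hφψ a
    · have h' : ∃ c' : C, s c' = s c := ⟨c, rfl⟩
      have h2 : h'.choose = c := s.injective h'.choose_spec
      exact (dif_neg h).trans ((dif_pos h').trans (congrArg ψ h2))
  obtain ⟨lt, hlt, hq⟩ := exists_order_of_weight q
  refine ⟨expand D lt, expand_mem hD hlt,
    liftEmb (P := expand D lt) r ?_, liftEmb (P := expand D lt) s ?_, ?_⟩
  · exact lt_iff_of_mono hB.2 hlt (fun b => r b)
      (fun b b' h => hq _ _ (by rw [qr, qr]; exact hφ _ _ h))
  · exact lt_iff_of_mono hC.2 hlt (fun b => s b)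
      (fun b b' h => hq _ _ (by rw [qs, qs]; exact hψ _ _ h))
  · ext a
    exact hrs' a

theorem orderedExpansion_hered {K : Set (Bundled.{w} L.Structure)} (hK : IsFraisseClass K)
    {N P : Bundled.{w} (L.sum Language.order).Structure} (hP : P ∈ orderedExpansion K)
    (f : N ↪[L.sum Language.order] P) : N ∈ orderedExpansion K := by
  refine ⟨hK.2.2.2.1 (red P) hP.1 (red N) ⟨redEmb f⟩, ?_⟩
  have h := isStrictTotalOrder_comap hP.2 f f.injective
  have e : (fun a b : N => OrdRel (L := L) (f a) (f b)) = OrdRel (L := L) := by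
    funext a b; exact propext (ordRel_emb f a b)
  rwa [e] at h

theorem orderedExpansion_isFraisseClass {K : Set (Bundled.{w} L.Structure)}
    (hK : IsFraisseClass K) (hF : FAP K) : IsFraisseClass (orderedExpansion K) := by
  refine ⟨?_, fun M hM => hK.2.1 _ hM.1, ?_, fun M hM N ⟨f⟩ => orderedExpansion_hered hK hM f,
    ?_, fun A B C hA hB hC f g => orderedExpansion_amalg hK hF A B C hA.1 hB hC f g⟩
  · obtain ⟨D, hD⟩ := hK.1
    obtain ⟨lt, hlt, -⟩ := exists_order_of_weight (fun _ : D => 0)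
    exact ⟨_, expand_mem hD hlt⟩
  · rintro M N ⟨e⟩
    exact ⟨fun h => orderedExpansion_hered hK h e.symm.toEmbedding,
      fun h => orderedExpansion_hered hK h e.toEmbedding⟩
  · -- amalgamate over the empty structure; joint embedding in `K` ensures that the two structures
    -- agree on nullary relations
    intro M hM N hN
    obtain ⟨P, -, ⟨f⟩, ⟨g⟩⟩ := hK.2.2.2.2.1 _ hM.1 _ hN.1
    let A : Bundled.{w} (L.sum Language.order).Structure :=
      restr (L := L.sum Language.order) (∅ : Set M)
    have hA : ∀ x : A, False := fun x => x.2
    let i : A ↪[L.sum Language.order] M := mkEmb (fun x => x.1) Subtype.val_injective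
      (fun _ _ => Iff.rfl)
    let j : A ↪[L.sum Language.order] N := mkEmb (fun x => (hA x).elim)
      (fun x => (hA x).elim) (by
        intro n R t
        match n, R, t with
        | _, Sum.inr orderRel.le, t => exact (hA (t 0)).elim
        | _, Sum.inl R, t =>
          have h1 := f.map_rel R (fun i => (t i).1)
          have h2 := g.map_rel R (fun i => (hA (t i)).elim)
          have h3 : (f ∘ fun i => (t i).1) = g ∘ fun i => (hA (t i)).elim := by
            funext i; exact (hA (t i)).elim
          rw [h3] at h1
          exact h2.symm.trans h1)
    obtain ⟨D, hD, r, s, -⟩ := orderedExpansion_amalg hK hF A M N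
      (orderedExpansion_hered hK hM i).1 hM hN i j
    exact ⟨D, hD, ⟨r⟩, ⟨s⟩⟩

end Expansion

end CDP

namespace CDP

/-! ### Copies of the limit inside the realizations of a type -/

section Cone

variable {L : FirstOrder.Language.{u, v}}

/-- Collapse every point of `M` to `m`, leaving `S` in place. -/
def collapse {M : Type w} (S : Set M) (m : M) : S ⊕ M → M := Sum.elim Subtype.val (fun _ => m)

/-- Forget the distinction between `S` and `M`. -/
def forget {M : Type w} (S : Set M) : S ⊕ M → M := Sum.elim Subtype.val id

/-- The `L`-structure on the disjoint union `S ⊕ M` in which every `x : M` with `P x` has over `S`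
the type of `m` over `S`, every other `x : M` is unrelated to `S`, and no related tuple contains a
point of `S` together with two points of `M`. -/
def cone (M : Bundled.{w} L.Structure) [L.IsRelational] (S : Set M) (m : M) (P : M → Prop) :
    Bundled.{w} L.Structure :=
  ⟨S ⊕ M, { funMap := fun F _ => isEmptyElim F
            RelMap := fun {n} R t => (∃ t' : Fin n → M, t = Sum.inr ∘ t' ∧ RelMap R t') ∨
              ∃ x, P x ∧ (∀ i, (∃ s, t i = Sum.inl s) ∨ t i = Sum.inr x) ∧
                RelMap R (collapse S m ∘ t) }⟩

variable [L.IsRelational]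

theorem relMap_cone {M : Bundled.{w} L.Structure} {S : Set M} {m : M} {P : M → Prop} {n : ℕ}
    (R : L.Relations n) (t : Fin n → S ⊕ M) :
    RelMap (M := cone M S m P) R t ↔ (∃ t' : Fin n → M, t = Sum.inr ∘ t' ∧ RelMap R t') ∨
      ∃ x, P x ∧ (∀ i, (∃ s, t i = Sum.inl s) ∨ t i = Sum.inr x) ∧
        RelMap R (collapse S m ∘ t) := Iff.rfl

theorem relMap_cone_inr {M : Bundled.{w} L.Structure} {S : Set M} {m : M} {P : M → Prop}
    (hP : ∀ x, P x → ∀ (n : ℕ) (R : L.Relations n),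
      RelMap R (fun _ : Fin n => x) ↔ RelMap R (fun _ : Fin n => m))
    {n : ℕ} (R : L.Relations n) (t : Fin n → M) :
    RelMap (M := cone M S m P) R (Sum.inr ∘ t) ↔ RelMap R t := by
  constructor
  · rintro (⟨t', h1, h2⟩ | ⟨x, hx, h1, h2⟩)
    · have : t = t' := by
        funext i; exact Sum.inr_injective (congrFun h1 i)
      rwa [this]
    · have e1 : t = fun _ => x := by
        funext i
        rcases h1 i with ⟨s, hs⟩ | h
        · cases hs
        · exact Sum.inr_injective h
      rw [e1, hP x hx]
      exact h2
  · exact fun h => Or.inl ⟨t, rfl, h⟩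

theorem relMap_cone_collapse {M : Bundled.{w} L.Structure} {S : Set M} {m : M} {P : M → Prop}
    (hP : ∀ x, P x → ∀ (n : ℕ) (R : L.Relations n),
      RelMap R (fun _ : Fin n => x) ↔ RelMap R (fun _ : Fin n => m))
    {n : ℕ} (R : L.Relations n) (t : Fin n → S ⊕ M) {x : M} (hx : P x)
    (ht : ∀ i, (∃ s, t i = Sum.inl s) ∨ t i = Sum.inr x) :
    RelMap (M := cone M S m P) R t ↔ RelMap R (collapse S m ∘ t) := by
  rw [relMap_cone]
  constructor
  · rintro (⟨t', h1, h2⟩ | ⟨x', -, -, h2⟩)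
    · have e1 : t' = fun _ => x := by
        funext i
        have hi := congrFun h1 i
        rcases ht i with ⟨s, hs⟩ | h
        · rw [hs] at hi; cases hi
        · rw [h] at hi; exact (Sum.inr_injective hi).symm
      rw [e1, hP x hx] at h2
      have e2 : collapse S m ∘ t = fun _ => m := by rw [h1]; rfl
      rwa [e2]
    · exact h2
  · exact fun h => Or.inr ⟨x, hx, ht, h⟩

theorem restr_mem_of_embOn {K : Set (Bundled.{w} L.Structure)} (hK : IsFraisseClass K)
    {W M : Type w} [L.Structure W] [L.Structure M]
    (hM : ∀ T : Set M, T.Finite → restr (L := L) T ∈ K) {S : Set W} (hS : S.Finite) {g : W → M}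
    (hg : EmbOn L S g) : restr (L := L) S ∈ K := by
  refine hK.2.2.2.1 _ (hM (g '' S) (hS.image g)) _
    ⟨mkEmb (A := restr (L := L) S) (B := restr (L := L) (g '' S))
      (fun x => ⟨g x.1, Set.mem_image_of_mem g x.2⟩) ?_ ?_⟩
  · intro x y h
    exact Subtype.ext (hg.1 x.2 y.2 (congrArg Subtype.val h))
  · intro n R t
    exact hg.2 n R (fun i => (t i).1) (fun i => (t i).2)

/-- This is where SFAP enters: by induction on the size, a substructure of the cone that is not
already a copy of a substructure of `M` has a pair or triple of points in no common related
tuple. -/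
theorem restr_cone_mem {K : Set (Bundled.{w} L.Structure)} (hK : IsFraisseClass K) (hSF : SFAP K)
    {M : Bundled.{w} L.Structure} (hM : ∀ T : Set M, T.Finite → restr (L := L) T ∈ K)
    {S : Set M} {m : M} (hmS : m ∉ S) {P : M → Prop} (hm : P m)
    (hP : ∀ x, P x → ∀ (n : ℕ) (R : L.Relations n),
      RelMap R (fun _ : Fin n => x) ↔ RelMap R (fun _ : Fin n => m))
    (T : Set (cone M S m P)) (hT : T.Finite) : restr (L := L) T ∈ K := by
  classical
  induction hk : T.ncard using Nat.strong_induction_on generalizing T with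
  | _ k ih =>
  have ih' : ∀ w ∈ T, restr (L := L) (T \ {w}) ∈ K := fun w hw =>
    ih _ (hk ▸ Set.ncard_sdiff_singleton_lt_of_mem hw hT) _ (hT.subset Set.sdiff_subset) rfl
  by_cases c1 : ∃ f : S, (Sum.inl f : S ⊕ M) ∈ T
  swap
  · have hr : ∀ w ∈ T, w = (Sum.inr (forget S w) : S ⊕ M) := by
      rintro (f | x) hw
      · exact absurd ⟨f, hw⟩ c1
      · rfl
    refine restr_mem_of_embOn hK hM hT (g := forget S) ⟨?_, ?_⟩
    · intro a ha b hb hab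
      rw [hr a ha, hr b hb, hab]
    · intro n R t ht
      have e1 : t = Sum.inr ∘ (forget S ∘ t) := by
        funext i; exact hr _ (ht i)
      conv_rhs => rw [e1]
      exact (relMap_cone_inr hP R _).symm
  obtain ⟨f, hf⟩ := c1
  by_cases c2 : ∃ x, P x ∧ ∀ w ∈ T, (∃ s : S, w = (Sum.inl s : S ⊕ M)) ∨ w = (Sum.inr x : S ⊕ M)
  · obtain ⟨x, hx, hw⟩ := c2
    refine restr_mem_of_embOn hK hM hT (g := collapse S m) ⟨?_, ?_⟩
    · intro a ha b hb hab
      rcases hw a ha with ⟨s, rfl⟩ | rfl <;> rcases hw b hb with ⟨s', rfl⟩ | rfl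
      · exact congrArg Sum.inl (Subtype.ext hab)
      · have h : s.1 = m := hab
        exact absurd (h ▸ s.2) hmS
      · have h : m = s'.1 := hab
        exact absurd (h ▸ s'.2) hmS
      · rfl
    · intro n R t ht
      exact (relMap_cone_collapse hP R t hx (fun i => hw _ (ht i))).symm
  by_cases c3 : ∃ x, (Sum.inr x : S ⊕ M) ∈ T
  swap
  · refine (c2 ⟨m, hm, ?_⟩).elim
    rintro (s | x) hw
    · exact Or.inl ⟨s, rfl⟩
    · exact absurd ⟨x, hw⟩ c3
  obtain ⟨x, hx⟩ := c3
  by_cases c4 : ∃ y, y ≠ x ∧ (Sum.inr y : S ⊕ M) ∈ T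
  · obtain ⟨y, hyx, hy⟩ := c4
    refine mem_of_triple hK hSF T hf hx hy (fun h => by cases h) (fun h => by cases h)
      (fun h => hyx (Sum.inr_injective h).symm) ?_ (ih' _ hf) (ih' _ hx) (ih' _ hy)
    rintro n R t (⟨t', rfl, h2⟩ | ⟨x', hx', h1, h2⟩) ⟨i, hi⟩ ⟨j, hj⟩ ⟨l, hl⟩
    · cases hi
    · have e1 := h1 j
      have e2 := h1 l
      rw [hj] at e1
      rw [hl] at e2
      rcases e1 with ⟨s, hs⟩ | e1
      · cases hs
      rcases e2 with ⟨s, hs⟩ | e2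
      · cases hs
      exact hyx ((Sum.inr_injective e2).trans (Sum.inr_injective e1).symm)
  · have hnP : ¬ P x := by
      intro hPx
      refine c2 ⟨x, hPx, ?_⟩
      rintro (s | y) hw
      · exact Or.inl ⟨s, rfl⟩
      · right
        by_contra hne
        exact c4 ⟨y, fun h => hne (congrArg Sum.inr h), hw⟩
    refine mem_of_pair hK hSF.1 T hf hx (fun h => by cases h) ?_ (ih' _ hf) (ih' _ hx)
    rintro n R t (⟨t', rfl, h2⟩ | ⟨x', hx', h1, h2⟩) ⟨i, hi⟩ ⟨j, hj⟩
    · cases hi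
    · have e1 := h1 j
      rw [hj] at e1
      rcases e1 with ⟨s, hs⟩ | e1
      · cases hs
      exact hnP ((Sum.inr_injective e1).symm ▸ hx')

/-- The order of the cone: all of `M` is inserted into the cut of `m` in `S`. -/
def coneLt {M : Type w} (S : Set M) (m : M) (lt : M → M → Prop) (a b : S ⊕ M) : Prop :=
  lt (collapse S m a) (collapse S m b) ∨
    collapse S m a = collapse S m b ∧ lt (forget S a) (forget S b)

theorem coneLt_isStrictTotalOrder {M : Type w} {S : Set M} {m : M} (hmS : m ∉ S)
    {lt : M → M → Prop} (hlt : IsStrictTotalOrder M lt) :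
    IsStrictTotalOrder (S ⊕ M) (coneLt S m lt) := by
  refine isStrictTotalOrder_comap (isStrictTotalOrder_lex hlt hlt)
    (fun a => (collapse S m a, forget S a)) ?_
  intro a b hab
  have h1 : collapse S m a = collapse S m b := congrArg Prod.fst hab
  have h2 : forget S a = forget S b := congrArg Prod.snd hab
  rcases a with s | x <;> rcases b with s' | x'
  · exact congrArg Sum.inl (Subtype.ext h1)
  · have h : s.1 = m := h1
    exact absurd (h ▸ s.2) hmS
  · have h : m = s'.1 := h1
    exact absurd (h ▸ s'.2) hmS
  · exact congrArg Sum.inr h2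

theorem restr_mem_of_limit {K : Set (Bundled.{w} L.Structure)} {M : Type w} [L.Structure M]
    (hM : IsFraisseLimitOf K M) (T : Set M) (hT : T.Finite) : restr (L := L) T ∈ K :=
  (hM.2.2.2 _).2 ⟨hT, ⟨mkEmb (A := restr (L := L) T) Subtype.val Subtype.val_injective
    (fun _ _ => Iff.rfl)⟩⟩

theorem limit_isStrictTotalOrder {K : Set (Bundled.{w} L.Structure)}
    {M : Type w} [(L.sum Language.order).Structure M]
    (hM : IsFraisseLimitOf (orderedExpansion K) M) : IsStrictTotalOrder M (OrdRel (L := L)) := by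
  have key : ∀ T : Set M, T.Finite →
      IsStrictTotalOrder T (fun a b => OrdRel (L := L) (a : M) (b : M)) := by
    intro T hT
    have h := (restr_mem_of_limit hM T hT).2
    have e : (OrdRel (L := L) (N := restr (L := L.sum Language.order) T)) =
        fun a b => OrdRel (L := L) (a.1 : M) (b.1 : M) := by
      funext a b
      exact propext (ordRel_emb (mkEmb (A := restr (L := L.sum Language.order) T) (B := M)
        Subtype.val Subtype.val_injective (fun _ _ => Iff.rfl)) a b).symm
    rw [e] at h
    exact h
  refine { trichotomous := fun a b h1 h2 => ?_, irrefl := fun a => ?_, trans := fun a b c => ?_ }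
  · exact congrArg Subtype.val
      ((key {a, b} (Set.toFinite _)).trichotomous ⟨a, by simp⟩ ⟨b, by simp⟩ h1 h2)
  · exact (key {a} (Set.toFinite _)).irrefl ⟨a, rfl⟩
  · exact (key {a, b, c} (Set.toFinite _)).trans ⟨a, by simp⟩ ⟨b, by simp⟩ ⟨c, by simp⟩

/-- There is a copy of `M` in `M` whose points coming from `P` all realize the type of `m` over the
finite set `S`, transported along the finite partial embedding `g`; that `f x` realizes this type
is expressed by an extension `g'` of `g` sending `m` to `f x`. The copy is the image of the cone
under an embedding into `M`, moved by an automorphism so as to agree with `g` on `S`. -/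
theorem exists_copy {K : Set (Bundled.{w} L.Structure)} (hK : IsFraisseClass K) (hSF : SFAP K)
    {M : Type w} [(L.sum Language.order).Structure M]
    (hM : IsFraisseLimitOf (orderedExpansion K) M)
    {S : Set M} (hS : S.Finite) {g : M → M} (hg : EmbOn (L.sum Language.order) S g)
    {m : M} (hmS : m ∉ S) {P : M → Prop} (hm : P m)
    (hP : ∀ x, P x → ∀ (n : ℕ) (R : (L.sum Language.order).Relations n),
      RelMap R (fun _ : Fin n => x) ↔ RelMap R (fun _ : Fin n => m)) :
    ∃ f : M ↪[L.sum Language.order] M, ∀ x, P x →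
      ∃ g' : M → M, Set.EqOn g' g S ∧ EmbOn (L.sum Language.order) (insert m S) g' ∧
        g' m = f x := by
  classical
  let Mb : Bundled.{w} (L.sum Language.order).Structure := ⟨M, inferInstance⟩
  let lt : M → M → Prop := OrdRel (L := L)
  have hlt : IsStrictTotalOrder M lt := limit_isStrictTotalOrder hM
  let C : Bundled.{w} L.Structure := cone (red Mb) S m P
  let W : Bundled.{w} (L.sum Language.order).Structure := expand C (coneLt S m lt)
  have hP' : ∀ x, P x → ∀ (n : ℕ) (R : L.Relations n),
      RelMap (M := red Mb) R (fun _ : Fin n => x) ↔ RelMap (M := red Mb) R (fun _ : Fin n => m) :=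
    fun x hx n R => hP x hx n (Sum.inl R)
  have hMfin : ∀ T : Set (red Mb), T.Finite → restr (L := L) T ∈ K := fun T hT =>
    hK.2.2.2.1 _ (restr_mem_of_limit hM T hT).1 _
      ⟨mkEmb (A := restr (L := L) T) (B := red (restr (L := L.sum Language.order) (W := M) T))
        id Function.injective_id (fun _ _ => Iff.rfl)⟩
  have hWfin : ∀ T : Set W, T.Finite →
      restr (L := L.sum Language.order) T ∈ orderedExpansion K := by
    intro T hT
    refine ⟨hK.2.2.2.1 _ (restr_cone_mem hK hSF hMfin hmS hm hP' T hT) _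
      ⟨mkEmb (A := red (restr (L := L.sum Language.order) T)) (B := restr (L := L) (W := C) T)
        id Function.injective_id (fun _ _ => Iff.rfl)⟩, ?_⟩
    exact isStrictTotalOrder_comap (coneLt_isStrictTotalOrder hmS hlt) (fun a : T => a.1)
      Subtype.val_injective
  have := hM.1
  have : Countable W := inferInstanceAs (Countable (S ⊕ M))
  obtain ⟨e⟩ := exists_embedding hM hWfin
  let inl : S → W := Sum.inl
  let inr : M → W := Sum.inr
  -- `ι x` realizes the type of `m` over `S` by the point `x` of the cone
  let ι : M → M → W := fun x z => if h : z ∈ S then inl ⟨z, h⟩ else inr x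
  have ιS : ∀ x z (h : z ∈ S), ι x z = inl ⟨z, h⟩ := fun x z h => dif_pos h
  have ιm : ∀ x, ι x m = inr x := fun x => dif_neg hmS
  have ιcol : ∀ x z, z ∈ insert m S → collapse S m (ι x z) = z := by
    rintro x z (rfl | hz)
    · rw [ιm]; rfl
    · rw [ιS x z hz]; rfl
  have hinr : ∀ (n : ℕ) (R : (L.sum Language.order).Relations n) (t : Fin n → M),
      RelMap R (inr ∘ t) ↔ RelMap R t := by
    intro n R t
    match n, R, t with
    | _, Sum.inl R, t => exact relMap_cone_inr (M := red Mb) (S := S) (m := m) (P := P) hP' R t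
    | _, Sum.inr orderRel.le, t =>
      rw [relMap_order, relMap_order]
      change lt m m ∨ m = m ∧ lt (t 0) (t 1) ↔ lt (t 0) (t 1)
      exact ⟨fun h => h.elim (fun h => (hlt.irrefl _ h).elim) (fun h => h.2),
        fun h => Or.inr ⟨rfl, h⟩⟩
  have hι : ∀ x, P x → ∀ (n : ℕ) (R : (L.sum Language.order).Relations n) (t : Fin n → M),
      (∀ i, t i ∈ insert m S) → (RelMap R (ι x ∘ t) ↔ RelMap R t) := by
    intro x hx n R t ht
    match n, R, t with
    | _, Sum.inl R, t =>
      refine (relMap_cone_collapse (M := red Mb) (S := S) (m := m) (P := P) hP' R (ι x ∘ t)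
        hx ?_).trans ?_
      · intro i
        rcases ht i with h | h
        · exact Or.inr ((congrArg (ι x) h).trans (ιm x))
        · exact Or.inl ⟨⟨t i, h⟩, ιS x _ h⟩
      · have : collapse S m ∘ (ι x ∘ t) = t := by
          funext i; exact ιcol x _ (ht i)
        exact iff_of_eq (congrArg (RelMap (M := red Mb) R) this)
    | _, Sum.inr orderRel.le, t =>
      rw [relMap_order, relMap_order]
      change lt (collapse S m (ι x (t 0))) (collapse S m (ι x (t 1))) ∨
        collapse S m (ι x (t 0)) = collapse S m (ι x (t 1)) ∧ _ ↔ lt (t 0) (t 1)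
      rw [ιcol x _ (ht 0), ιcol x _ (ht 1)]
      refine ⟨fun h => h.elim id ?_, Or.inl⟩
      rintro ⟨h1, h2⟩
      have e1 : ι x (t 0) = ι x (t 1) := congrArg (ι x) h1
      change lt (forget S (ι x (t 0))) (forget S (ι x (t 1))) at h2
      rw [e1] at h2
      exact (hlt.irrefl _ h2).elim
  have := hS.to_subtype
  obtain ⟨h, hh⟩ := exists_aut hM.2.2.1 (I := S) (fun i => e (inl i)) (fun i => g i.1)
    (by
      intro i j
      constructor
      · intro hij
        rw [Sum.inl_injective (e.injective hij)]
      · intro hij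
        have h2 : i = j := Subtype.ext (hg.1 i.2 j.2 hij)
        rw [h2])
    (by
      intro n R t
      refine (hg.2 n R (fun i => (t i).1) (fun i => (t i).2)).trans ?_
      refine (hι m hm n R (fun i => (t i).1) (fun i => Or.inr (t i).2)).symm.trans ?_
      rw [← e.map_rel]
      apply iff_of_eq; congr 1; funext i
      rw [Function.comp, Function.comp, ιS m _ (t i).2]
      rfl)
  refine ⟨mkEmb (fun x => h (e (inr x)))
    (fun x y hxy => Sum.inr_injective (e.injective (h.injective hxy))) ?_, fun x hx =>
    ⟨fun z => h (e (ι x z)), ?_, ⟨?_, ?_⟩, ?_⟩⟩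
  · intro n R t
    exact (h.map_rel R (e ∘ (inr ∘ t))).trans ((e.map_rel R (inr ∘ t)).trans (hinr n R t))
  · intro z hz
    change h (e (ι x z)) = g z
    rw [ιS x z hz]
    exact hh ⟨z, hz⟩
  · intro y hy z hz hyz
    have h1 : ι x y = ι x z := e.injective (h.injective hyz)
    rw [← ιcol x y hy, h1, ιcol x z hz]
  · intro n R t ht
    exact (h.map_rel R (e ∘ (ι x ∘ t))).trans ((e.map_rel R (ι x ∘ t)).trans (hι x hx n R t ht))
  · change h (e (ι x m)) = h (e (inr x))
    rw [ιm]

/-- Either a copy of `M` whose points of type `tp(a)` all have color `i` is built greedily, or the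
construction gets stuck at a type none of whose realizations has color `i`, and the copy of `M`
given by `exists_copy` reduces the number of colors. -/
theorem indivisible {K : Set (Bundled.{w} L.Structure)} (hK : IsFraisseClass K) (hSF : SFAP K)
    {M : Type w} [(L.sum Language.order).Structure M]
    (hM : IsFraisseLimitOf (orderedExpansion K) M) {k : ℕ} (a : M) (s : Finset (Fin k))
    (c : M → Fin k)
    (hc : ∀ x, SameEmptyType (L := L.sum Language.order) a x → c x ∈ s) :
    ∃ f : M ↪[L.sum Language.order] M, ∃ i : Fin k,
      ∀ x, SameEmptyType (L := L.sum Language.order) a x → c (f x) = i := by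
  classical
  induction hs : s.card using Nat.strong_induction_on generalizing s c with
  | _ N ih =>
  have ha : SameEmptyType (L := L.sum Language.order) a a := fun R => Iff.rfl
  let i := c a
  have hi : i ∈ s := hc a ha
  have := hM.1
  have : Nonempty M := ⟨a⟩
  by_cases H : ∀ (S : Set M) (g : M → M), S.Finite → EmbOn (L.sum Language.order) S g →
      (∀ x ∈ S, SameEmptyType (L := L.sum Language.order) a x → c (g x) = i) →
      ∀ w ∉ S, ∃ g' : M → M, Set.EqOn g' g S ∧ EmbOn (L.sum Language.order) (insert w S) g' ∧
        (SameEmptyType (L := L.sum Language.order) a w → c (g' w) = i)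
  · obtain ⟨f, hf⟩ := greedy (L := L.sum Language.order)
      (fun x y => SameEmptyType (L := L.sum Language.order) a x → c y = i) H (by
        refine ⟨Set.injOn_empty _, fun n R t ht => ?_⟩
        apply iff_of_eq; congr 1; funext j
        exact absurd (ht j) (Set.notMem_empty _))
    exact ⟨f, i, hf⟩
  push Not at H
  obtain ⟨S, g, hS, hg, -, m, hmS, hm⟩ := H
  have hPm : SameEmptyType (L := L.sum Language.order) a m := by
    obtain ⟨g', h1, h2⟩ := extend_point hM hS hg (x := m)
      (restr_mem_of_limit hM _ (hS.insert m))
    exact (hm g' h1 h2).1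
  obtain ⟨f, hf⟩ := exists_copy hK hSF hM hS hg hmS
    (P := fun x => SameEmptyType (L := L.sum Language.order) a x) hPm
    (fun x hx n R => (hx R).trans (hPm R).symm)
  obtain ⟨f', j, hf'⟩ := ih (s.erase i).card (hs ▸ Finset.card_erase_lt_of_mem hi) (s.erase i)
    (c ∘ f) (by
      intro x hx
      obtain ⟨g', h1, h2, h3⟩ := hf x hx
      refine Finset.mem_erase.2 ⟨?_, hc _ ?_⟩
      · have := (hm g' h1 h2).2
        rwa [h3] at this
      · intro n R
        exact (f.map_rel R (fun _ => x)).trans (hx R)) rfl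
  exact ⟨f.comp f', j, hf'⟩

end Cone

end CDP

/-- If a Fraïssé class `K` in a finite relational language satisfies SFAP, then its
ordered expansion `K^<` is a Fraïssé class and every Fraïssé limit of `K^<` is indivisible. -/
theorem orderedExpansion_isFraisseClass_and_indivisible
    (L : FirstOrder.Language.{u, v}) [L.IsRelational]
    (hfin : Finite (Σ n, L.Relations n))
    (K : Set (CategoryTheory.Bundled.{w} L.Structure))
    (hK : CDP.IsFraisseClass K)
    (hnoloops : ∀ M ∈ K, CDP.NoLoops (L := L) M)
    (hSFAP : CDP.SFAP K) :
    CDP.IsFraisseClass (CDP.orderedExpansion K) ∧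
    ∀ (M : Type w) [(L.sum FirstOrder.Language.order).Structure M],
      CDP.IsFraisseLimitOf (CDP.orderedExpansion K) M →
      ∀ k : ℕ, 1 ≤ k → ∀ c : M → Fin k, ∀ a : M,
        ∃ f : M ↪[L.sum FirstOrder.Language.order] M, ∃ i : Fin k,
          ∀ x : M, CDP.SameEmptyType (L := L.sum FirstOrder.Language.order) a x →
            c (f x) = i := by
  exact ⟨CDP.orderedExpansion_isFraisseClass hK hSFAP.1, fun M _ hM k _ c a =>
    CDP.indivisible hK hSFAP hM a Finset.univ c (fun _ _ => Finset.mem_univ _)⟩
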